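/- Let R be a symmetric (2,2)-double form satisfying the first Bianchi identity on an n-dimensional real inner product space (V,g), and let k ≥ 1 with 2k+2 ≤ n. Then the Laplace-type expansion h_{2k+2}(R) = ⟨N_{2k}(R), R⟩ holds. -/

import Mathlib

noncomputable section

open Finset

/-- Double forms over an `n`-dimensional real inner product space, described by their
coefficients in a fixed orthonormal basis: a `(p,q)`-double form corresponds to a function
supported on pairs of subsets of cardinalities `p` and `q`. -/
abbrev DForm (n : ℕ) := Finset (Fin n) → Finset (Fin n) → ℝ

namespace DForm

variable {n : ℕ}

/-- Sign of the shuffle placing the elements of `A` (in increasing order) before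
those of `B` (in increasing order). -/
def shuffleSign (A B : Finset (Fin n)) : ℝ :=
  (-1 : ℝ) ^ (∑ x ∈ B, (A.filter fun a => x < a).card)

/-- The exterior product of double forms. -/
def wedge (ω₁ ω₂ : DForm n) : DForm n := fun I J =>
  ∑ A ∈ I.powerset, ∑ B ∈ J.powerset,
    shuffleSign A (I \ A) * shuffleSign B (J \ B) * ω₁ A B * ω₂ (I \ A) (J \ B)

/-- Exterior powers `ω^k` of a double form. -/
def dpow (ω : DForm n) : ℕ → DForm n
  | 0 => fun I J => if I = ∅ ∧ J = ∅ then 1 else 0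
  | k + 1 => wedge ω (dpow ω k)

/-- The double Hodge star operator. -/
def hstar (ω : DForm n) : DForm n := fun I J =>
  shuffleSign Iᶜ I * shuffleSign Jᶜ J * ω Iᶜ Jᶜ

/-- The contraction `c` of double forms. -/
def contr (ω : DForm n) : DForm n := fun I J =>
  ∑ j : Fin n,
    if j ∈ I ∨ j ∈ J then 0
    else shuffleSign {j} I * shuffleSign {j} J * ω (insert j I) (insert j J)

/-- Iterated contraction `c^k`. -/
def citer (ω : DForm n) : ℕ → DForm n
  | 0 => ω
  | k + 1 => contr (citer ω k)

/-- The inner product of double forms. -/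
def dinner (ω₁ ω₂ : DForm n) : ℝ :=
  ∑ I : Finset (Fin n), ∑ J : Finset (Fin n), ω₁ I J * ω₂ I J

/-- The transpose `ω^t` of a double form. -/
def transp (ω : DForm n) : DForm n := fun I J => ω J I

/-- The composition (Greub) product `ω₁ ∘ ω₂` of double forms. -/
def comp (ω₁ ω₂ : DForm n) : DForm n := fun I J =>
  ∑ K : Finset (Fin n), ω₂ I K * ω₁ K J

/-- The scalar value of a `(0,0)`-double form. -/
def toScalar (ω : DForm n) : ℝ := ω ∅ ∅

/-- The metric, as a `(1,1)`-double form. -/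
def gMetric (n : ℕ) : DForm n := fun I J => if I = J ∧ I.card = 1 then 1 else 0

/-- Iterated composition power `ω^{∘r}` of a `(1,1)`-double form, with `ω^{∘0} = g`. -/
def cpow (ω : DForm n) : ℕ → DForm n
  | 0 => gMetric n
  | r + 1 => comp ω (cpow ω r)

/-- The `(1,1)`-double form associated to a bilinear form, given by its matrix in the
orthonormal basis. -/
def ofMatrix (h : Matrix (Fin n) (Fin n) ℝ) : DForm n := fun I J =>
  ∑ i : Fin n, ∑ j : Fin n, if I = {i} ∧ J = {j} then h i j else 0

/-- `ω` is a `(p,q)`-double form. -/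
def IsOfDeg (ω : DForm n) (p q : ℕ) : Prop :=
  ∀ I J : Finset (Fin n), ω I J ≠ 0 → I.card = p ∧ J.card = q

/-- `ω` is a symmetric double form. -/
def IsSym (ω : DForm n) : Prop := ∀ I J, ω I J = ω J I

/-- The sign relating `e_{v 0} ∧ ⋯ ∧ e_{v (p-1)}` to the corresponding increasing
basis `p`-vector (and `0` if the indices are not pairwise distinct). -/
def tupleSign {p : ℕ} (v : Fin p → Fin n) : ℝ :=
  if Function.Injective v then (((Equiv.Perm.sign (Tuple.sort v)) : ℤ) : ℝ) else 0

/-- Evaluation of a double form on wedges of basis vectors indexed by arbitrary tuples. -/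
def evalT (ω : DForm n) {p q : ℕ} (v : Fin p → Fin n) (w : Fin q → Fin n) : ℝ :=
  tupleSign v * tupleSign w * ω (Finset.image v Finset.univ) (Finset.image w Finset.univ)

/-- The first Bianchi identity for a `(2,2)`-double form:
`R(x∧y,z∧t) + R(y∧z,x∧t) + R(z∧x,y∧t) = 0`. -/
def Bianchi2 (R : DForm n) : Prop :=
  ∀ x y z t : Fin n,
    evalT R ![x, y] ![z, t] + evalT R ![y, z] ![x, t] + evalT R ![z, x] ![y, t] = 0

/-- The first Bianchi identity for a `(p,p)`-double form. -/
def FirstBianchi (ω : DForm n) (p : ℕ) : Prop :=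
  ∀ (x : Fin (p + 1) → Fin n) (y : Fin (p - 1) → Fin n),
    ∑ j : Fin (p + 1),
      (-1 : ℝ) ^ (j : ℕ) * evalT ω (x ∘ Fin.succAbove j) (Fin.cons (x j) y) = 0

/-- The characteristic coefficient `s_k(h)` of a bilinear form `h`, defined through the
characteristic polynomial: `det(h - λ g) = ∑ (-1)^(n-i) s_i(h) λ^(n-i)`. -/
def sInv (h : Matrix (Fin n) (Fin n) ℝ) (k : ℕ) : ℝ :=
  (-1 : ℝ) ^ k * (Matrix.charpoly h).coeff (n - k)

/-- The `k`-th cofactor (Newton) transformation `t_k(h) = (1/(k!(n-1-k)!)) *(g^{n-1-k} h^k)`. -/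
def tInv (h : Matrix (Fin n) (Fin n) ℝ) (k : ℕ) : DForm n :=
  ((k.factorial * (n - 1 - k).factorial : ℕ) : ℝ)⁻¹ •
    hstar (wedge (dpow (gMetric n) (n - 1 - k)) (dpow (ofMatrix h) k))

/-- The `(r,q)`-cofactor `s_{(r,q)}(h) = (1/(q!(n-q-r)!)) *(g^{n-q-r} h^q)`. -/
def sCof (h : Matrix (Fin n) (Fin n) ℝ) (r q : ℕ) : DForm n :=
  ((q.factorial * (n - q - r).factorial : ℕ) : ℝ)⁻¹ •
    hstar (wedge (dpow (gMetric n) (n - q - r)) (dpow (ofMatrix h) q))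

end DForm
namespace DForm
variable {n : ℕ}

/-- The Gauss–Bonnet invariant `h_{2k}(R) = c^{2k}(R^k)/(2k)!`. -/
noncomputable def hGB (R : DForm n) (k : ℕ) : ℝ :=
  toScalar (citer (dpow R k) (2 * k)) / ((2 * k).factorial : ℝ)

/-- The Einstein–Lovelock tensor `T_{2k}(R) = (c^{2k}(R^k)/(2k)!) g - c^{2k-1}(R^k)/(2k-1)!`. -/
noncomputable def TT (R : DForm n) (k : ℕ) : DForm n :=
  (toScalar (citer (dpow R k) (2 * k)) / ((2 * k).factorial : ℝ)) • gMetric n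
    - (((2 * k - 1).factorial : ℕ) : ℝ)⁻¹ • citer (dpow R k) (2 * k - 1)

/-- The cofactor transformation
`N_{2k}(R) = c^{2k-2}(R^k)/(2k-2)! - (c^{2k-1}(R^k)/(2k-1)!) g + (c^{2k}(R^k)/(2 (2k)!)) g²`. -/
noncomputable def NN (R : DForm n) (k : ℕ) : DForm n :=
  (((2 * k - 2).factorial : ℕ) : ℝ)⁻¹ • citer (dpow R k) (2 * k - 2)
    - (((2 * k - 1).factorial : ℕ) : ℝ)⁻¹ • wedge (citer (dpow R k) (2 * k - 1)) (gMetric n)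
    + (toScalar (citer (dpow R k) (2 * k)) / (2 * ((2 * k).factorial : ℝ))) •
        dpow (gMetric n) 2

end DForm

namespace DForm
variable {n : ℕ}

theorem ss_union_left {A A' : Finset (Fin n)} (B : Finset (Fin n)) (h : Disjoint A A') :
    shuffleSign (A ∪ A') B = shuffleSign A B * shuffleSign A' B := by
  unfold shuffleSign
  rw [← pow_add, ← Finset.sum_add_distrib]
  congr 1
  refine Finset.sum_congr rfl fun x _ => ?_
  rw [Finset.filter_union, Finset.card_union_of_disjoint (Finset.disjoint_filter_filter h)]

theorem ss_union_right (A : Finset (Fin n)) {B B' : Finset (Fin n)} (h : Disjoint B B') :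
    shuffleSign A (B ∪ B') = shuffleSign A B * shuffleSign A B' := by
  unfold shuffleSign
  rw [← pow_add, Finset.sum_union h]

theorem ss_sq (A B : Finset (Fin n)) : shuffleSign A B * shuffleSign A B = 1 := by
  unfold shuffleSign
  rw [← pow_add, ← two_mul, pow_mul]; norm_num

theorem ss_empty_right (A : Finset (Fin n)) : shuffleSign A ∅ = 1 := by
  simp [shuffleSign]

theorem ss_swap {A B : Finset (Fin n)} (h : Disjoint A B) :
    shuffleSign A B * shuffleSign B A = (-1) ^ (A.card * B.card) := by
  unfold shuffleSign
  rw [← pow_add]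
  congr 1
  simp only [Finset.card_filter]
  rw [Finset.sum_comm (s := B), ← Finset.sum_add_distrib, Finset.card_eq_sum_ones, Finset.sum_mul]
  refine Finset.sum_congr rfl fun a ha => ?_
  rw [← Finset.sum_add_distrib, one_mul, Finset.card_eq_sum_ones]
  refine Finset.sum_congr rfl fun b hb => ?_
  have : a ≠ b := fun e => (Finset.disjoint_left.mp h ha) (e ▸ hb)
  rcases lt_or_gt_of_ne this with h | h
  · simp [h, not_lt.mpr h.le]
  · simp [h, not_lt.mpr h.le]

theorem ss_swap' {A B : Finset (Fin n)} (h : Disjoint A B) :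
    shuffleSign A B = (-1) ^ (A.card * B.card) * shuffleSign B A := by
  rw [← ss_swap h, mul_assoc, ss_sq, mul_one]

theorem ss_swap_pair {K X Y : Finset (Fin n)} (hX : Disjoint K X) (hY : Disjoint K Y)
    (hc : X.card = Y.card) :
    shuffleSign K X * shuffleSign K Y = shuffleSign X K * shuffleSign Y K := by
  rw [ss_swap' hX, ss_swap' hY, hc]
  have : ((-1:ℝ) ^ (K.card * Y.card)) * ((-1:ℝ) ^ (K.card * Y.card)) = 1 := by
    rw [← mul_pow]; norm_num
  linear_combination (shuffleSign X K * shuffleSign Y K) * this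

theorem sum_pc_succ (j : ℕ) (h : Fin n → Finset (Fin n) → ℝ) :
    ∑ K ∈ powersetCard (j + 1) univ, ∑ x ∈ K, h x K
      = ∑ x : Fin n, ∑ K ∈ powersetCard j univ, if x ∈ K then 0 else h x (insert x K) := by
  have : ∀ x : Fin n, (∑ K ∈ powersetCard j univ, if x ∈ K then 0 else h x (insert x K))
      = ∑ K ∈ (powersetCard j univ).filter (fun K => x ∉ K), h x (insert x K) := by
    intro x
    rw [Finset.sum_filter]
    exact Finset.sum_congr rfl fun K _ => by by_cases hx : x ∈ K <;> simp [hx]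
  simp only [this]
  rw [Finset.sum_sigma', Finset.sum_sigma']
  refine Finset.sum_bij' (fun a _ => ⟨a.2, a.1.erase a.2⟩) (fun a _ => ⟨insert a.1 a.2, a.1⟩)
    ?_ ?_ ?_ ?_ ?_
  · rintro ⟨K, x⟩ h
    simp at h
    simp [Finset.card_erase_of_mem h.2, h.1]
  · rintro ⟨x, K⟩ h
    simp at h
    simp [h.1, Finset.card_insert_of_notMem h.2]
  · rintro ⟨K, x⟩ h
    simp at h
    simp [Finset.insert_erase h.2]
  · rintro ⟨x, K⟩ h
    simp at h
    simp [Finset.erase_insert h.2]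
  · rintro ⟨K, x⟩ h
    simp at h
    simp [Finset.insert_erase h.2]

theorem citer_formula (ω : DForm n) (j : ℕ) : ∀ X Y : Finset (Fin n),
    citer ω j X Y = (j.factorial : ℝ) * ∑ K ∈ powersetCard j univ,
      if Disjoint K X ∧ Disjoint K Y then
        shuffleSign K X * shuffleSign K Y * ω (K ∪ X) (K ∪ Y) else 0 := by
  induction j with
  | zero =>
    intro X Y
    simp [citer, shuffleSign]
  | succ j ih =>
    intro X Y
    have key : ∀ f : Finset (Fin n) → ℝ,
        (((j + 1).factorial : ℕ) : ℝ) * ∑ K ∈ powersetCard (j + 1) univ, f K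
        = (j.factorial : ℝ) * ∑ K ∈ powersetCard (j + 1) univ, ∑ x ∈ K, f K := by
      intro f
      rw [Nat.factorial_succ, Nat.cast_mul, mul_comm ((j + 1 : ℕ) : ℝ), mul_assoc, Finset.mul_sum]
      congr 1
      refine Finset.sum_congr rfl fun K hK => ?_
      rw [Finset.sum_const, (Finset.mem_powersetCard.mp hK).2, nsmul_eq_mul]
    rw [key, sum_pc_succ, Finset.mul_sum]
    simp only [citer, contr]
    refine Finset.sum_congr rfl fun x _ => ?_
    by_cases hx : x ∈ X ∨ x ∈ Y
    · rw [if_pos hx]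
      symm
      rw [Finset.sum_eq_zero, mul_zero]
      intro K _
      split_ifs with h1 h2
      · rfl
      · exfalso
        rw [Finset.disjoint_insert_left, Finset.disjoint_insert_left] at h2
        tauto
      · rfl
    · rw [if_neg hx, ih, mul_left_comm, Finset.mul_sum]
      push Not at hx
      congr 1
      refine Finset.sum_congr rfl fun K _ => ?_
      by_cases hxK : x ∈ K
      · rw [if_pos hxK, if_neg, mul_zero]
        rw [Finset.disjoint_insert_right]; tauto
      · rw [if_neg hxK]
        simp only [Finset.disjoint_insert_right, Finset.disjoint_insert_left, hxK, hx,
          not_false_eq_true, true_and]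
        split_ifs with hd
        · have e1 : ∀ Z : Finset (Fin n), x ∉ Z → shuffleSign K (insert x Z)
              = shuffleSign K {x} * shuffleSign K Z := fun Z hZ => by
            rw [Finset.insert_eq, ss_union_right _ (by simpa using hZ)]
          have e2 : ∀ Z : Finset (Fin n), shuffleSign (insert x K) Z
              = shuffleSign {x} Z * shuffleSign K Z := fun Z => by
            rw [Finset.insert_eq, ss_union_left _ (by simpa using hxK)]
          rw [e1 X hx.1, e1 Y hx.2, e2, e2, Finset.union_insert, Finset.union_insert,
            Finset.insert_union, Finset.insert_union]
          linear_combination (shuffleSign {x} X * shuffleSign {x} Y * shuffleSign K X *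
            shuffleSign K Y * ω (insert x (K ∪ X)) (insert x (K ∪ Y))) * ss_sq K {x}
        · simp

theorem wedge_g (θ : DForm n) (X Y : Finset (Fin n)) :
    wedge θ (gMetric n) X Y = ∑ e ∈ X ∩ Y,
      shuffleSign (X \ {e}) {e} * shuffleSign (Y \ {e}) {e} * θ (X \ {e}) (Y \ {e}) := by
  unfold wedge
  rw [← Finset.sum_product']
  symm
  refine Finset.sum_of_injOn (fun e => (X \ {e}, Y \ {e})) ?_ ?_ ?_ ?_
  · intro a ha b hb hab
    simp at ha hb hab
    have : a ∉ X \ {b} := by rw [← hab.1]; simp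
    simpa [ha.1] using this
  · intro a ha
    simp
  · rintro ⟨P, Q⟩ h hn
    simp only [gMetric]
    rw [if_neg, mul_zero]
    rintro ⟨h1, h2⟩
    apply hn
    obtain ⟨e, he⟩ := Finset.card_eq_one.mp h2
    simp at h
    have h3 : Y \ Q = {e} := by rw [← h1, he]
    refine ⟨e, ?_, ?_⟩
    · have a1 : e ∈ X \ P := by simp [he]
      have a2 : e ∈ Y \ Q := by simp [h3]
      simp at a1 a2
      simp [a1, a2]
    · simp only [← he]
      rw [Prod.mk.injEq, he, ← h3, Finset.sdiff_sdiff_eq_self h.2, h3, ← he,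
        Finset.sdiff_sdiff_eq_self h.1]
      trivial
  · intro e he
    simp at he
    have h1 : X \ (X \ {e}) = {e} := Finset.sdiff_sdiff_eq_self (by simpa using he.1)
    have h2 : Y \ (Y \ {e}) = {e} := Finset.sdiff_sdiff_eq_self (by simpa using he.2)
    simp [h1, h2, gMetric]

theorem wedge_one (θ : DForm n) : wedge θ (dpow θ 0) = θ := by
  funext X Y
  unfold wedge
  rw [Finset.sum_eq_single X, Finset.sum_eq_single Y]
  · simp [dpow, ss_empty_right]
  · intro B hB hne
    have : Y \ B ≠ ∅ := fun h => hne
      (Finset.Subset.antisymm (Finset.mem_powerset.mp hB) (Finset.sdiff_eq_empty_iff_subset.mp h))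
    simp [dpow, this]
  · simp
  · intro A hA hne
    have : X \ A ≠ ∅ := fun h => hne
      (Finset.Subset.antisymm (Finset.mem_powerset.mp hA) (Finset.sdiff_eq_empty_iff_subset.mp h))
    simp [dpow, this]
  · simp

theorem g_sq {X Y : Finset (Fin n)} (hX : X.card = 2) (hY : Y.card = 2) :
    dpow (gMetric n) 2 X Y = if X = Y then 2 else 0 := by
  have : dpow (gMetric n) 2 = wedge (gMetric n) (gMetric n) := by
    show wedge _ (wedge _ (dpow _ 0)) = _
    rw [wedge_one]
  rw [this, wedge_g]
  split_ifs with h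
  · subst h
    rw [Finset.inter_self, Finset.sum_congr rfl (g := fun _ => (1:ℝ)), Finset.sum_const, hX]
    · simp
    · intro e he
      rw [ss_sq, one_mul, gMetric, if_pos]
      refine ⟨rfl, ?_⟩
      rw [Finset.card_sdiff_of_subset (by simpa using he)]
      simp [hX]
  · refine Finset.sum_eq_zero fun e he => ?_
    simp at he
    rw [gMetric, if_neg, mul_zero]
    rintro ⟨h1, -⟩
    apply h
    rw [← Finset.sdiff_union_of_subset (Finset.singleton_subset_iff.mpr he.1), h1,
      Finset.sdiff_union_of_subset (Finset.singleton_subset_iff.mpr he.2)]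

/-- The normalized iterated contraction `c^j ω / j!`. -/
def cNorm (ω : DForm n) (j : ℕ) (X Y : Finset (Fin n)) : ℝ :=
  ∑ K ∈ powersetCard j univ,
      if Disjoint K X ∧ Disjoint K Y then
        shuffleSign K X * shuffleSign K Y * ω (K ∪ X) (K ∪ Y) else 0

theorem sign_one {A' B' D E L : Finset (Fin n)} (hA'D : Disjoint A' D) (hB'D : Disjoint B' D)
    (hA'E : Disjoint A' E) (hB'E : Disjoint B' E) (hDE : Disjoint D E)
    (hLD : Disjoint L D) (hc : A'.card = B'.card) :
    shuffleSign (B' ∪ D) E * shuffleSign (A' ∪ D) E *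
      (shuffleSign L (B' ∪ D) * shuffleSign L (A' ∪ D))
    = shuffleSign (D ∪ E) A' * shuffleSign (D ∪ E) B' *
      (shuffleSign (L ∪ D) A' * shuffleSign (L ∪ D) B') := by
  rw [ss_union_left _ hB'D, ss_union_left _ hA'D, ss_union_right _ hB'D, ss_union_right _ hA'D,
    ss_union_left _ hDE, ss_union_left _ hDE, ss_union_left _ hLD, ss_union_left _ hLD]
  have h1 := ss_swap_pair hA'E.symm hB'E.symm hc
  calc _ = (shuffleSign A' E * shuffleSign B' E) * (shuffleSign L A' * shuffleSign L B') *
        (shuffleSign D E * shuffleSign D E) * (shuffleSign L D * shuffleSign L D) := by ring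
    _ = (shuffleSign E A' * shuffleSign E B') * (shuffleSign L A' * shuffleSign L B') *
        (shuffleSign D A' * shuffleSign D A') * (shuffleSign D B' * shuffleSign D B') := by
      rw [ss_sq, ss_sq, ss_sq, ss_sq, h1]
    _ = _ := by ring

theorem sign_two {A' B' C K : Finset (Fin n)} (hCA : Disjoint C A') (hCB : Disjoint C B')
    (hAB : Disjoint A' B') (hKA : Disjoint K A') (hKB : Disjoint K B') (hKC : Disjoint K C)
    (hc : A'.card = B'.card) :
    shuffleSign (C ∪ A') (B' ∪ K) * shuffleSign (C ∪ B') (A' ∪ K)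
    = (-1) ^ A'.card * (shuffleSign C A' * shuffleSign C B') *
      (shuffleSign K A' * shuffleSign K B') := by
  rw [ss_union_left _ hCA, ss_union_left _ hCB, ss_union_right _ hKB.symm,
    ss_union_right _ hKB.symm, ss_union_right _ hKA.symm, ss_union_right _ hKA.symm]
  have h1 := ss_swap_pair hKA hKB hc
  have h2 := ss_swap hAB
  have h3 : ((-1 : ℝ)) ^ (A'.card * B'.card) = (-1) ^ A'.card := by
    rw [← hc]
    rcases Nat.even_or_odd A'.card with h | h
    · rw [h.neg_one_pow, (h.mul_left _).neg_one_pow]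
    · rw [h.neg_one_pow, (h.mul h).neg_one_pow]
  rw [h1, ← h3, ← h2]
  linear_combination (shuffleSign C A' * shuffleSign C B' * shuffleSign A' B' * shuffleSign B' A' *
    shuffleSign A' K * shuffleSign B' K) * ss_sq C K

theorem claim_one (ω : DForm n) (p : ℕ) {A' B' D E : Finset (Fin n)}
    (hA'D : Disjoint A' D) (hB'D : Disjoint B' D)
    (hA'E : Disjoint A' E) (hB'E : Disjoint B' E) (hDE : Disjoint D E)
    (hc : A'.card = B'.card) (hcard : A'.card + D.card + E.card = 2) (hp : 2 ≤ p) :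
    shuffleSign (B' ∪ D) E * shuffleSign (A' ∪ D) E * cNorm ω (p - 2 + E.card) (B' ∪ D) (A' ∪ D)
    = shuffleSign (D ∪ E) A' * shuffleSign (D ∪ E) B' *
      ∑ K ∈ powersetCard (p - A'.card) univ, if (Disjoint K A' ∧ Disjoint K B') ∧ D ⊆ K then
        shuffleSign K A' * shuffleSign K B' * ω (K ∪ B') (K ∪ A') else 0 := by
  unfold cNorm
  rw [Finset.mul_sum, Finset.mul_sum]
  simp only [mul_ite, mul_zero]
  rw [← Finset.sum_filter, ← Finset.sum_filter]
  refine Finset.sum_bij' (fun L _ => L ∪ D) (fun K _ => K \ D) ?_ ?_ ?_ ?_ ?_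
  · intro L h
    simp only [mem_filter, mem_powersetCard, disjoint_union_right] at h
    have := Finset.card_union_of_disjoint h.2.1.2
    simp only [mem_filter, mem_powersetCard, disjoint_union_left, subset_univ, true_and]
    refine ⟨by omega, ⟨⟨h.2.2.1, hA'D.symm⟩, ⟨h.2.1.1, hB'D.symm⟩⟩, subset_union_right⟩
  · intro K h
    simp only [mem_filter, mem_powersetCard, subset_univ, true_and] at h
    have := Finset.card_sdiff_add_card_eq_card h.2.2
    simp only [mem_filter, mem_powersetCard, disjoint_union_right, subset_univ, true_and]
    refine ⟨by omega, ⟨h.2.1.2.mono_left sdiff_subset, sdiff_disjoint⟩,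
      ⟨h.2.1.1.mono_left sdiff_subset, sdiff_disjoint⟩⟩
  · intro L h
    simp only [mem_filter, mem_powersetCard, disjoint_union_right] at h
    exact Finset.union_sdiff_cancel_right h.2.1.2
  · intro K h
    simp only [mem_filter, mem_powersetCard, subset_univ, true_and] at h
    exact Finset.sdiff_union_of_subset h.2.2
  · intro L h
    simp only [mem_filter, mem_powersetCard, disjoint_union_right] at h
    rw [← mul_assoc (shuffleSign (B' ∪ D) E * shuffleSign (A' ∪ D) E), sign_one hA'D hB'D hA'E hB'E hDE h.2.1.2 hc, mul_assoc,
      Finset.union_comm B' D, Finset.union_comm A' D, Finset.union_assoc L D B',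
      Finset.union_assoc L D A']

theorem claim_two (ω : DForm n) (p : ℕ) {A' B' C : Finset (Fin n)}
    (hCA : Disjoint C A') (hCB : Disjoint C B') (hAB : Disjoint A' B')
    (hc : A'.card = B'.card) (hcard : A'.card + C.card = 2) (hp : 2 ≤ p) :
    (∑ I ∈ powersetCard (p + 2) univ, if C ∪ A' ⊆ I ∧ C ∪ B' ⊆ I then
      shuffleSign (C ∪ A') (I \ (C ∪ A')) * shuffleSign (C ∪ B') (I \ (C ∪ B')) *
        ω (I \ (C ∪ A')) (I \ (C ∪ B')) else 0)
    = (-1) ^ A'.card * (shuffleSign C A' * shuffleSign C B') *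
      ∑ K ∈ powersetCard (p - A'.card) univ, if (Disjoint K A' ∧ Disjoint K B') ∧ Disjoint K C then
        shuffleSign K A' * shuffleSign K B' * ω (K ∪ B') (K ∪ A') else 0 := by
  rw [Finset.mul_sum]
  simp only [mul_ite, mul_zero]
  rw [← Finset.sum_filter, ← Finset.sum_filter]
  have hU : (C ∪ A' ∪ B').card = C.card + A'.card + B'.card := by
    rw [Finset.card_union_of_disjoint (by simp [hCB, hAB]), Finset.card_union_of_disjoint hCA]
  symm
  refine Finset.sum_bij' (fun K _ => K ∪ (C ∪ A' ∪ B')) (fun I _ => I \ (C ∪ A' ∪ B'))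
    ?_ ?_ ?_ ?_ ?_
  · intro K h
    simp only [mem_filter, mem_powersetCard] at h
    have hd : Disjoint K (C ∪ A' ∪ B') := by simp [h.2]
    have := Finset.card_union_of_disjoint hd
    simp only [mem_filter, mem_powersetCard, subset_univ, true_and]
    refine ⟨by omega, ?_, ?_⟩ <;> intro x hx <;> simp at hx ⊢ <;> tauto
  · intro I h
    simp only [mem_filter, mem_powersetCard, subset_univ, true_and] at h
    have hs : C ∪ A' ∪ B' ⊆ I :=
      union_subset h.2.1 (subset_union_right.trans h.2.2)
    have := Finset.card_sdiff_add_card_eq_card hs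
    have hd : Disjoint (I \ (C ∪ A' ∪ B')) (C ∪ A' ∪ B') := sdiff_disjoint
    simp only [disjoint_union_right] at hd
    simp only [mem_filter, mem_powersetCard, subset_univ, true_and]
    exact ⟨by omega, ⟨hd.1.2, hd.2⟩, hd.1.1⟩
  · intro K h
    simp only [mem_filter, mem_powersetCard] at h
    exact Finset.union_sdiff_cancel_right (by simp [h.2])
  · intro I h
    simp only [mem_filter, mem_powersetCard, subset_univ, true_and] at h
    exact Finset.sdiff_union_of_subset
      (union_subset h.2.1 (subset_union_right.trans h.2.2))
  · intro K h
    simp only [mem_filter, mem_powersetCard] at h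
    obtain ⟨-, ⟨hKA, hKB⟩, hKC⟩ := h
    have e1 : (K ∪ (C ∪ A' ∪ B')) \ (C ∪ A') = B' ∪ K := by
      have : K ∪ (C ∪ A' ∪ B') = (B' ∪ K) ∪ (C ∪ A') := by ext x; simp; tauto
      rw [this]
      exact Finset.union_sdiff_cancel_right (by simp [hKA, hKC, hCB.symm, hAB.symm])
    have e2 : (K ∪ (C ∪ A' ∪ B')) \ (C ∪ B') = A' ∪ K := by
      have : K ∪ (C ∪ A' ∪ B') = (A' ∪ K) ∪ (C ∪ B') := by ext x; simp; tauto
      rw [this]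
      exact Finset.union_sdiff_cancel_right (by simp [hKB, hKC, hCA.symm, hAB])
    rw [e1, e2, sign_two hCA hCB hAB hKA hKB hKC hc, Finset.union_comm B' K, Finset.union_comm A' K]
    ring

theorem incl_excl (C K : Finset (Fin n)) :
    (∑ E ∈ C.powerset, (-1 : ℝ) ^ E.card * (if C \ E ⊆ K then 1 else 0))
      = (-1) ^ C.card * if Disjoint K C then 1 else 0 := by
  have h1 : (∑ E ∈ C.powerset, (-1 : ℝ) ^ E.card * (if C \ E ⊆ K then 1 else 0))
      = ∑ D ∈ C.powerset, (-1 : ℝ) ^ C.card * ((-1) ^ D.card * if D ⊆ K then 1 else 0) := by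
    refine Finset.sum_bij' (fun E _ => C \ E) (fun E _ => C \ E) ?_ ?_ ?_ ?_ ?_
    · intro E _; simp
    · intro E _; simp
    · intro E h; exact Finset.sdiff_sdiff_eq_self (mem_powerset.mp h)
    · intro E h; exact Finset.sdiff_sdiff_eq_self (mem_powerset.mp h)
    · intro E h
      have := Finset.card_sdiff_add_card_eq_card (mem_powerset.mp h)
      rw [← mul_assoc]
      congr 1
      rw [← this, ← pow_add, add_right_comm, pow_add, ← two_mul, pow_mul]
      simp
  rw [h1, ← Finset.mul_sum]
  congr 1
  simp only [mul_ite, mul_one, mul_zero]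
  rw [← Finset.sum_filter]
  have h2 : C.powerset.filter (fun D => D ⊆ K) = (C ∩ K).powerset := by
    ext D; simp only [mem_filter, mem_powerset, Finset.subset_inter_iff]
  rw [h2]
  have h3 := congrArg (Int.cast : ℤ → ℝ) (Finset.sum_powerset_neg_one_pow_card (x := C ∩ K))
  push_cast at h3
  rw [h3]
  simp only [disjoint_comm (a := K), Finset.disjoint_iff_inter_eq_empty]

theorem laplace (ω : DForm n) (p : ℕ) (hp : 2 ≤ p) {A B : Finset (Fin n)}
    (hA : A.card = 2) (hB : B.card = 2) :
    (∑ I ∈ powersetCard (p + 2) univ, if A ⊆ I ∧ B ⊆ I then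
      shuffleSign A (I \ A) * shuffleSign B (I \ B) * ω (I \ A) (I \ B) else 0)
    = ∑ E ∈ (A ∩ B).powerset, (-1) ^ E.card *
      (shuffleSign (B \ E) E * shuffleSign (A \ E) E * cNorm ω (p - 2 + E.card) (B \ E) (A \ E)) := by
  obtain ⟨A', hA'⟩ : ∃ A', A' = A \ B := ⟨_, rfl⟩
  obtain ⟨B', hB'⟩ : ∃ B', B' = B \ A := ⟨_, rfl⟩
  obtain ⟨C, hC⟩ : ∃ C, C = A ∩ B := ⟨_, rfl⟩
  have eA : A = C ∪ A' := by subst hA' hC; ext x; simp; tauto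
  have eB : B = C ∪ B' := by subst hB' hC; ext x; simp; tauto
  have hCA : Disjoint C A' := by
    subst hA' hC; exact (disjoint_sdiff (s := B)).mono_left inter_subset_right
  have hCB : Disjoint C B' := by
    subst hB' hC; exact (disjoint_sdiff (s := A)).mono_left inter_subset_left
  have hAB : Disjoint A' B' := by
    subst hA' hB'; exact (disjoint_sdiff (s := A)).mono_left sdiff_subset
  rw [← hC]
  clear hA' hB' hC
  subst eA eB
  rw [Finset.card_union_of_disjoint hCA] at hA
  rw [Finset.card_union_of_disjoint hCB] at hB
  have hc : A'.card = B'.card := by omega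
  rw [claim_two ω p hCA hCB hAB hc (by omega) hp]
  have h1 : ∀ E ∈ C.powerset, (-1 : ℝ) ^ E.card *
      (shuffleSign ((C ∪ B') \ E) E * shuffleSign ((C ∪ A') \ E) E *
        cNorm ω (p - 2 + E.card) ((C ∪ B') \ E) ((C ∪ A') \ E))
      = ∑ K ∈ powersetCard (p - A'.card) univ, (shuffleSign C A' * shuffleSign C B') *
        (if (Disjoint K A' ∧ Disjoint K B') then
        shuffleSign K A' * shuffleSign K B' * ω (K ∪ B') (K ∪ A') else 0) *
          ((-1 : ℝ) ^ E.card * (if C \ E ⊆ K then 1 else 0)) := by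
    intro E hE
    rw [mem_powerset] at hE
    have d1 : (C ∪ B') \ E = B' ∪ C \ E := by
      rw [union_sdiff_distrib, sdiff_eq_self_of_disjoint (hCB.symm.mono_right hE), union_comm]
    have d2 : (C ∪ A') \ E = A' ∪ C \ E := by
      rw [union_sdiff_distrib, sdiff_eq_self_of_disjoint (hCA.symm.mono_right hE), union_comm]
    have d3 := Finset.card_sdiff_add_card_eq_card hE
    rw [d1, d2, claim_one ω p (hCA.symm.mono_right sdiff_subset) (hCB.symm.mono_right sdiff_subset)
      (hCA.symm.mono_right hE) (hCB.symm.mono_right hE) sdiff_disjoint hc (by omega) hp,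
      sdiff_union_of_subset hE, Finset.mul_sum, Finset.mul_sum]
    refine Finset.sum_congr rfl fun K _ => ?_
    by_cases c1 : Disjoint K A' ∧ Disjoint K B' <;> by_cases c2 : C \ E ⊆ K
    · simp only [c1, c2, and_self, if_true]; ring
    · simp [c2]
    · simp only [c1, false_and, if_false]; ring
    · simp [c2]
  rw [Finset.sum_congr rfl h1, Finset.sum_comm, Finset.mul_sum]
  refine Finset.sum_congr rfl fun K _ => ?_
  rw [← Finset.mul_sum, incl_excl]
  have h2 : (-1 : ℝ) ^ A'.card = (-1) ^ C.card := by
    have : (-1 : ℝ) ^ C.card * (-1) ^ A'.card = 1 := by rw [← pow_add, hA]; norm_num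
    have h3 : (-1 : ℝ) ^ C.card * (-1) ^ C.card = 1 := by rw [← mul_pow]; norm_num
    linear_combination (-1 : ℝ) ^ C.card * this - (-1 : ℝ) ^ A'.card * h3
  rw [h2]
  by_cases c1 : Disjoint K A' ∧ Disjoint K B' <;> by_cases c2 : Disjoint K C
  · simp only [c1, c2, and_self, if_true]; ring
  · simp [c2]
  · simp only [c1, false_and, if_false]; ring
  · simp [c2]

theorem citer_cNorm (ω : DForm n) (j : ℕ) (X Y : Finset (Fin n)) :
    citer ω j X Y = (j.factorial : ℝ) * cNorm ω j X Y := citer_formula ω j X Y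

theorem fac_ne (j : ℕ) : (j.factorial : ℝ) ≠ 0 := by exact_mod_cast j.factorial_ne_zero

theorem NN_eq (R : DForm n) (k : ℕ) (hk : 1 ≤ k) {A B : Finset (Fin n)}
    (hA : A.card = 2) (hB : B.card = 2) :
    NN R k B A = ∑ E ∈ (A ∩ B).powerset, (-1) ^ E.card *
      (shuffleSign (B \ E) E * shuffleSign (A \ E) E *
        cNorm (dpow R k) (2 * k - 2 + E.card) (B \ E) (A \ E)) := by
  have hle : (A ∩ B).card ≤ 2 := hA ▸ Finset.card_le_card inter_subset_left
  rw [Finset.sum_powerset]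
  have hr : range ((A ∩ B).card + 1) ⊆ range 3 := by
    intro x; simp only [Finset.mem_range]; omega
  rw [Finset.sum_subset hr]
  swap
  · intro j _ hj
    rw [Finset.powersetCard_eq_empty.mpr, Finset.sum_empty]
    simp only [Finset.mem_range] at hj; omega
  rw [Finset.sum_range_succ, Finset.sum_range_succ, Finset.sum_range_one]
  have e1 : 2 * k - 2 + 1 = 2 * k - 1 := by omega
  have e2 : 2 * k - 2 + 2 = 2 * k := by omega
  simp only [NN, Pi.add_apply, Pi.sub_apply, Pi.smul_apply, smul_eq_mul]
  congr 1
  · rw [sub_eq_add_neg]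
    congr 1
    · rw [citer_cNorm, inv_mul_cancel_left₀ (fac_ne _)]
      simp [ss_empty_right]
    · rw [wedge_g, Finset.powersetCard_one, Finset.sum_map, Finset.mul_sum, ← Finset.sum_neg_distrib,
        Finset.inter_comm]
      refine Finset.sum_congr rfl fun e _ => ?_
      rw [citer_cNorm]
      simp only [Function.Embedding.coeFn_mk, card_singleton, e1, pow_one]
      have := fac_ne (2 * k - 1)
      field_simp
  · rw [g_sq hB hA, toScalar, citer_cNorm]
    split_ifs with h
    · subst h
      have := Finset.powersetCard_self B
      rw [hB] at this
      rw [Finset.inter_self, this, Finset.sum_singleton, ss_sq, hB, e2, Finset.sdiff_self]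
      have := fac_ne (2 * k)
      field_simp
    · rw [mul_zero, Finset.powersetCard_eq_empty.mpr, Finset.sum_empty]
      by_contra hlt
      apply h
      have h1 := Finset.eq_of_subset_of_card_le (inter_subset_left (s₁ := A) (s₂ := B)) (by omega)
      have h2 := Finset.eq_of_subset_of_card_le (inter_subset_right (s₁ := A) (s₂ := B)) (by omega)
      exact h2.symm.trans h1

end DForm

open DForm in
/-- Laplace expansion of the Gauss–Bonnet invariants: `h_{2k+2}(R) = ⟨N_{2k}(R), R⟩`. -/
theorem statement12 (n : ℕ) (R : DForm n) (hsym : IsSym R) (hb : Bianchi2 R)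
    (hgr : IsOfDeg R 2 2) (k : ℕ) (hk : 1 ≤ k) (hkn : 2 * k + 2 ≤ n) :
    hGB R (k + 1) = dinner (NN R k) R := by
  have h1 : hGB R (k + 1) = ∑ I ∈ powersetCard (2 * k + 2) univ, dpow R (k + 1) I I := by
    rw [hGB, toScalar, citer_cNorm, mul_div_cancel_left₀ _ (fac_ne _), cNorm]
    refine Finset.sum_congr rfl fun K _ => ?_
    simp [ss_empty_right]
  have h2 : ∀ I : Finset (Fin n), dpow R (k + 1) I I = ∑ A : Finset (Fin n), ∑ B : Finset (Fin n),
      R A B * if A ⊆ I ∧ B ⊆ I then shuffleSign A (I \ A) * shuffleSign B (I \ B) *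
        dpow R k (I \ A) (I \ B) else 0 := by
    intro I
    show wedge R (dpow R k) I I = _
    unfold wedge
    have hp : I.powerset = univ.filter (fun A => A ⊆ I) := by ext A; simp
    rw [hp, Finset.sum_filter]
    refine Finset.sum_congr rfl fun A _ => ?_
    by_cases hA : A ⊆ I
    · rw [if_pos hA, Finset.sum_filter]
      refine Finset.sum_congr rfl fun B _ => ?_
      by_cases hB : B ⊆ I
      · simp only [hA, hB, and_self, if_true]; ring
      · simp [hB]
    · simp [hA]
  have h3 : dinner (NN R k) R = ∑ A : Finset (Fin n), ∑ B : Finset (Fin n), R A B * NN R k B A := by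
    rw [dinner, Finset.sum_comm]
    refine Finset.sum_congr rfl fun A _ => Finset.sum_congr rfl fun B _ => ?_
    rw [hsym B A, mul_comm]
  rw [h1, h3, Finset.sum_congr rfl fun I _ => h2 I, Finset.sum_comm]
  refine Finset.sum_congr rfl fun A _ => ?_
  rw [Finset.sum_comm]
  refine Finset.sum_congr rfl fun B _ => ?_
  rw [← Finset.mul_sum]
  by_cases h0 : R A B = 0
  · rw [h0, zero_mul, zero_mul]
  · obtain ⟨hA, hB⟩ := hgr A B h0
    rw [NN_eq R k hk hA hB, laplace (dpow R k) (2 * k) (by omega) hA hB]
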